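/- Let β₁, β₂ ≥ 0 with β₁ + β₂ < 1, and let μ be a Borel probability measure on ℝ that is invariant under the reflection x ↦ −x (for instance a centered Gaussian measure). If m : ℝ → [−1,1] is a bounded measurable function satisfying m(x) = tanh(β₁(x + m(x)) + β₂·∫ m dμ) for every x ∈ ℝ, then ∫ m dμ = 0 and m(x) = tanh(β₁(x + m(x))) for every x ∈ ℝ. -/

import Mathlib

open MeasureTheory

/-!
Adding the fixed-point equations at `x` and at its reflection `σ x` cancels the field, because the
nonlinearity is odd: the symmetrization `s x = m x + m (σ x)` is the increment of the nonlinearity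
over an interval of signed length `β₁ * s x + 2 * β₂ * M`. A monotone `1`-Lipschitz function has
increments between `0` and the increment of its argument, so `(1 - β₁) * s x` lies between `0` and
`2 * β₂ * M`, where `M` is the mean of `m`. These bounds do not depend on `x` and `s`
has mean `2 * M`, hence `(1 - β₁) * (2 * M)` lies between `0` and `β₂ * (2 * M)`, and
`β₂ < 1 - β₁` with `0 < 1 - β₁` forces `M = 0`.
-/

section OrderedRing

variable {R : Type*} [CommRing R] [LinearOrder R] [IsStrictOrderedRing R]

theorem one_sub_mul_mem_uIcc_zero {β r d : R} (hβ : β < 1)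
    (hr : r ∈ Set.uIcc 0 (β * r + d)) : (1 - β) * r ∈ Set.uIcc 0 d := by
  have hβ' : 0 < 1 - β := sub_pos.mpr hβ
  rcases Set.mem_uIcc.mp hr with ⟨hr₀, hr₁⟩ | ⟨hr₁, hr₀⟩
  · exact Set.mem_uIcc_of_le (mul_nonneg hβ'.le hr₀) (by linarith)
  · exact Set.mem_uIcc_of_ge (by linarith) (mul_nonpos_of_nonneg_of_nonpos hβ'.le hr₀)

theorem eq_zero_of_mul_mem_uIcc_zero_mul {a b x : R} (ha : 0 < a) (hba : b < a)
    (hx : a * x ∈ Set.uIcc 0 (b * x)) : x = 0 := by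
  have hab : 0 < a - b := sub_pos.mpr hba
  rcases Set.mem_uIcc.mp hx with ⟨hx₀, hx₁⟩ | ⟨hx₁, hx₀⟩
  · exact le_antisymm (nonpos_of_mul_nonpos_right (by linarith : (a - b) * x ≤ 0) hab)
      (nonneg_of_mul_nonneg_right hx₀ ha)
  · exact le_antisymm (nonpos_of_mul_nonpos_right hx₀ ha)
      (nonneg_of_mul_nonneg_right (by linarith : 0 ≤ (a - b) * x) hab)

end OrderedRing

section Sigmoid

theorem hasDerivAt_tanh (x : ℝ) : HasDerivAt Real.tanh (1 / Real.cosh x ^ 2) x := by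
  have h := (Real.hasDerivAt_sinh x).div (Real.hasDerivAt_cosh x) (Real.cosh_pos x).ne'
  rw [← sq, ← sq, Real.cosh_sq_sub_sinh_sq] at h
  exact h.congr_of_eventuallyEq (.of_forall Real.tanh_eq_sinh_div_cosh)

theorem monotone_tanh : Monotone Real.tanh :=
  monotone_of_hasDerivAt_nonneg hasDerivAt_tanh fun _ => by positivity

theorem lipschitzWith_one_tanh : LipschitzWith 1 Real.tanh := by
  refine lipschitzWith_of_nnnorm_deriv_le
    (fun x => (hasDerivAt_tanh x).differentiableAt) fun x => ?_
  rw [(hasDerivAt_tanh x).deriv, ← NNReal.coe_le_coe, coe_nnnorm, NNReal.coe_one,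
    Real.norm_of_nonneg (by positivity)]
  exact div_le_one_of_le₀ (one_le_pow₀ (Real.one_le_cosh x)) (by positivity)

variable {φ : ℝ → ℝ}

theorem sub_mem_uIcc_zero_sub (hmono : Monotone φ) (hlip : LipschitzWith 1 φ) (a b : ℝ) :
    φ a - φ b ∈ Set.uIcc 0 (a - b) := by
  have hdist : |φ a - φ b| ≤ |a - b| := by
    simpa only [Real.dist_eq, NNReal.coe_one, one_mul] using hlip.dist_le_mul a b
  rcases le_total b a with hab | hab
  · rw [abs_of_nonneg (sub_nonneg.mpr hab)] at hdist
    exact Set.mem_uIcc_of_le (sub_nonneg.mpr (hmono hab)) (le_of_abs_le hdist)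
  · rw [abs_of_nonpos (sub_nonpos.mpr hab)] at hdist
    exact Set.mem_uIcc_of_ge (neg_le_neg_iff.mp ((neg_le_abs _).trans hdist))
      (sub_nonpos.mpr (hmono hab))

theorem one_sub_mul_add_mem_uIcc_of_opposite_fields (hodd : Function.Odd φ) (hmono : Monotone φ)
    (hlip : LipschitzWith 1 φ) {β c h u v : ℝ} (hβ : β < 1)
    (hu : u = φ (β * (h + u) + c)) (hv : v = φ (β * (-h + v) + c)) :
    (1 - β) * (u + v) ∈ Set.uIcc 0 (2 * c) := by
  have hincr := sub_mem_uIcc_zero_sub hmono hlip (β * (h + u) + c) (-(β * (-h + v) + c))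
  have hgap : β * (h + u) + c - -(β * (-h + v) + c) = β * (u + v) + 2 * c := by ring
  rw [hgap, hodd, ← hu, ← hv, sub_neg_eq_add] at hincr
  exact one_sub_mul_mem_uIcc_zero hβ hincr

end Sigmoid

section Symmetric

variable {E : Type*} [MeasurableSpace E] {μ : Measure E} {σ : E → E}

theorem integral_add_comp_measurePreserving {F : Type*} [NormedAddCommGroup F] [NormedSpace ℝ F]
    (hσ : MeasurePreserving σ μ μ) {f : E → F} (hf : Integrable f μ) :
    ∫ x, (f x + f (σ x)) ∂μ = (2 : ℝ) • ∫ x, f x ∂μ := by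
  have hcomp : ∫ x, f (σ x) ∂μ = ∫ x, f x ∂μ := by
    have hmap := integral_map hσ.aemeasurable (hσ.map_eq.symm ▸ hf.aestronglyMeasurable)
    rw [← hmap, hσ.map_eq]
  have hfσ : Integrable (fun x => f (σ x)) μ := hσ.integrable_comp_of_integrable hf
  rw [integral_add hf hfσ, hcomp, two_smul]

theorem order_N_fixed_point_symmetric_general [IsProbabilityMeasure μ]
    (hσ : MeasurePreserving σ μ μ) {h : E → ℝ} (hh : ∀ x, h (σ x) = -h x)
    {φ : ℝ → ℝ} (hodd : Function.Odd φ) (hmono : Monotone φ) (hlip : LipschitzWith 1 φ)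
    {β₁ β₂ : ℝ} (hβ₁ : β₁ < 1) (hsub : β₁ + β₂ < 1) {m : E → ℝ} (hm : Integrable m μ)
    (hfix : ∀ x, m x = φ (β₁ * (h x + m x) + β₂ * ∫ y, m y ∂μ)) :
    (∫ y, m y ∂μ = 0) ∧ ∀ x, m x = φ (β₁ * (h x + m x)) := by
  have hmean : ∫ y, m y ∂μ = 0 := by
    set M := ∫ y, m y ∂μ with hM
    have hpointwise (x : E) : (1 - β₁) * (m x + m (σ x)) ∈ Set.uIcc 0 (2 * (β₂ * M)) :=
      one_sub_mul_add_mem_uIcc_of_opposite_fields hodd hmono hlip hβ₁ (hfix x)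
        (hh x ▸ hfix (σ x))
    have haverage : (1 - β₁) * (2 * M) ∈ Set.uIcc 0 (β₂ * (2 * M)) := by
      have hint := (convex_uIcc 0 (2 * (β₂ * M))).integral_mem isClosed_Icc (.of_forall hpointwise)
        ((hm.add (hσ.integrable_comp_of_integrable hm)).const_mul (1 - β₁))
      rwa [integral_const_mul, integral_add_comp_measurePreserving hσ hm, smul_eq_mul, ← hM,
        mul_left_comm 2 β₂ M] at hint
    have htwice : 2 * M = 0 :=
      eq_zero_of_mul_mem_uIcc_zero_mul (by linarith) (by linarith) haverage
    linarith
  exact ⟨hmean, fun x => by simpa only [hmean, mul_zero, add_zero] using hfix x⟩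

end Symmetric

/-- Triviality of the order-N limit dynamics under a symmetric environment: if μ is a
reflection-invariant probability measure, β₁ + β₂ < 1, and m : ℝ → [−1,1] is bounded
measurable with m(x) = tanh(β₁(x + m(x)) + β₂∫m dμ) for all x, then ∫m dμ = 0 and
m(x) = tanh(β₁(x + m(x))) for all x. -/
theorem order_N_fixed_point_symmetric (β₁ β₂ : ℝ) (h₁ : 0 ≤ β₁) (h₂ : 0 ≤ β₂)
    (hsub : β₁ + β₂ < 1) (μ : Measure ℝ) [IsProbabilityMeasure μ]
    (hsym : μ.map (fun x => -x) = μ)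
    (m : ℝ → ℝ) (hmeas : Measurable m) (hb : ∀ x, m x ∈ Set.Icc (-1 : ℝ) 1)
    (hfix : ∀ x, m x = Real.tanh (β₁ * (x + m x) + β₂ * ∫ y, m y ∂μ)) :
    (∫ y, m y ∂μ = 0) ∧ ∀ x, m x = Real.tanh (β₁ * (x + m x)) :=
  order_N_fixed_point_symmetric_general ⟨measurable_neg, hsym⟩ (h := id) (fun _ => rfl)
    Real.tanh_neg monotone_tanh lipschitzWith_one_tanh (by linarith) hsub
    (.of_mem_Icc (-1) 1 hmeas.aemeasurable (.of_forall hb)) hfix
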